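/- In the HiOCO setting with zero local delay, the dynamic regret satisfies: Σ_{t=1}^{T} (f_t(x_t) − f_t(x_t*)) ≤ τ·D·R + (D/(1 − η^{(J_l+J_r)/2})) · ( τ·R + τ·Π* + (√β/(1 − √η))·Δ ). -/

import Mathlib

open scoped RealInnerProductSpace

/-!
Strong convexity and smoothness make one inexact projected gradient step a contraction towards the
minimizer with factor `√η`, up to an additive error `√β δ`.  Running `J_r` steps on `f_{t-τ}` and
then `J_l` steps on `f_t` therefore gives, for `d_t = ‖x_t - x_t*‖`,
`d_t ≤ (√η)^(J_l+J_r) d_{t-τ} + ‖x_t* - x_{t-τ}*‖ + (√β / (1 - √η)) · (gradient errors)`.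
Summing over `t > τ` and absorbing the shifted sum of `d_{t-τ}` into the left-hand side bounds
`∑ d_t`; the regret of each round is at most `D d_t`.
-/

section Convexity

open scoped Topology in
theorem add_modulus_norm_sub_le_of_uniformConvexOn_of_isMinOn {E : Type*} [NormedAddCommGroup E]
    [NormedSpace ℝ E] {X : Set E} {φ : ℝ → ℝ} {f : E → ℝ} {s p : E}
    (hf : UniformConvexOn X φ f) (hs : s ∈ X) (hmin : IsMinOn f X s) (hp : p ∈ X) :
    f s + φ ‖s - p‖ ≤ f p := by
  have hbelow : ∀ r ∈ Set.Ioo (0 : ℝ) 1, f s + (1 - r) * φ ‖s - p‖ ≤ f p := by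
    rintro r ⟨hr0, hr1⟩
    have hr1' : 0 ≤ 1 - r := sub_nonneg.2 hr1.le
    have hsum : 1 - r + r = 1 := sub_add_cancel 1 r
    have hmin_le := isMinOn_iff.1 hmin _ (hf.1 hs hp hr1' hr0.le hsum)
    have hconv := hf.2 hs hp hr1' hr0.le hsum
    simp only [smul_eq_mul] at hconv
    refine le_of_mul_le_mul_left ?_ hr0
    linarith
  have hlim : Filter.Tendsto (fun r : ℝ => f s + (1 - r) * φ ‖s - p‖) (𝓝[>] 0)
      (𝓝 (f s + φ ‖s - p‖)) := by
    refine ((by fun_prop : Continuous fun r : ℝ => f s + (1 - r) * φ ‖s - p‖).tendsto' 0 _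
      (by simp only [sub_zero, one_mul])).mono_left nhdsWithin_le_nhds
  exact le_of_tendsto hlim (Filter.mem_of_superset (Ioo_mem_nhdsGT one_pos) hbelow)

variable {E : Type*} [NormedAddCommGroup E] [InnerProductSpace ℝ E] {X : Set E}

theorem strongConvexOn_of_add_inner_le {f : E → ℝ} {G : E → E} {m : ℝ} (hX : Convex ℝ X)
    (h : ∀ a ∈ X, ∀ b ∈ X, f a + ⟪G a, b - a⟫ + m / 2 * ‖b - a‖ ^ 2 ≤ f b) :
    StrongConvexOn X m f := by
  refine ⟨hX, fun u hu v hv a b ha hb hab => ?_⟩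
  obtain rfl : b = 1 - a := eq_sub_of_add_eq' hab
  set c := a • u + (1 - a) • v
  have hc : c ∈ X := hX hu hv ha hb hab
  have hu_sub : u - c = (1 - a) • (u - v) := by module
  have hv_sub : v - c = -(a • (u - v)) := by module
  have hfu := mul_le_mul_of_nonneg_left (h c hc u hu) ha
  have hfv := mul_le_mul_of_nonneg_left (h c hc v hv) hb
  rw [hu_sub, inner_smul_right, norm_smul, Real.norm_of_nonneg hb] at hfu
  rw [hv_sub, inner_neg_right, inner_smul_right, norm_neg, norm_smul,
    Real.norm_of_nonneg ha] at hfv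
  simp only [smul_eq_mul]
  linarith

theorem sub_le_mul_norm_sub_of_add_inner_le {f : E → ℝ} {a b g : E} {D : ℝ}
    (h : f a + ⟪g, b - a⟫ ≤ f b) (hg : ‖g‖ ≤ D) : f a - f b ≤ D * ‖a - b‖ :=
  calc f a - f b ≤ ⟪g, a - b⟫ := by rw [← neg_sub b a, inner_neg_right]; linarith
    _ ≤ ‖g‖ * ‖a - b‖ := real_inner_le_norm g _
    _ ≤ D * ‖a - b‖ := by gcongr

theorem inner_sub_sub_nonpos_of_isMinOn_norm_sub {u p w : E} (hX : Convex ℝ X) (hp : p ∈ X)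
    (hmin : IsMinOn (fun v => ‖u - v‖) X p) (hw : w ∈ X) : ⟪u - p, w - p⟫ ≤ 0 :=
  (norm_eq_iInf_iff_real_inner_le_zero hX hp).1 (hmin.iInf_eq hp).symm w hw

end Convexity

theorem le_sqrt_mul_add_sqrt_mul_of_mul_sq_le {A B γ δ u v : ℝ} (hγ : 0 < γ) (hγA : γ < A)
    (hB : 0 ≤ B) (hδ : 0 ≤ δ) (hv : 0 ≤ v) (h : A * u ^ 2 ≤ B * v ^ 2 + 2 * (δ * u)) :
    u ≤ √(B / (A - γ)) * v + √(1 / (γ * (A - γ))) * δ := by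
  have hAγ : 0 < A - γ := sub_pos.2 hγA
  have hyoung : 2 * u * δ ≤ γ * u ^ 2 + γ⁻¹ * δ ^ 2 := two_mul_le_add_mul_sq hγ
  have hsq : u ^ 2 ≤ B / (A - γ) * v ^ 2 + 1 / (γ * (A - γ)) * δ ^ 2 := by
    have hfactor : B / (A - γ) * v ^ 2 + 1 / (γ * (A - γ)) * δ ^ 2
        = (B * v ^ 2 + γ⁻¹ * δ ^ 2) / (A - γ) := by field_simp
    rw [hfactor, le_div_iff₀ hAγ]
    linarith
  refine le_of_sq_le_sq (hsq.trans ?_) (by positivity)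
  have hcross : 0 ≤ (√(B / (A - γ)) * v) * (√(1 / (γ * (A - γ))) * δ) := by positivity
  rw [add_sq, mul_pow, mul_pow, Real.sq_sqrt (by positivity), Real.sq_sqrt (by positivity)]
  linarith

theorem le_pow_mul_add_of_affine_recursion {d : ℕ → ℝ} {q c : ℝ} {n : ℕ} (hq : 0 ≤ q)
    (hq1 : q ≠ 1) (h : ∀ j < n, d (j + 1) ≤ q * d j + c) :
    d n ≤ q ^ n * d 0 + (1 - q ^ n) * (c / (1 - q)) := by
  have hfixed : q * (c / (1 - q)) + c = c / (1 - q) := by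
    have : 1 - q ≠ 0 := sub_ne_zero.2 hq1.symm
    field_simp
    ring
  have hgeom := le_geom (u := fun j => d j - c / (1 - q)) hq n fun j hj => by
    linarith [h j hj]
  linarith

theorem sum_Icc_comp_sub_le {M : Type*} [AddCommMonoid M] [PartialOrder M] [IsOrderedAddMonoid M]
    {g : ℕ → M} {i k m n : ℕ} (hik : k + i ≤ m) (hg : ∀ t ∈ Finset.Icc k n, 0 ≤ g t) :
    ∑ t ∈ Finset.Icc m n, g (t - i) ≤ ∑ t ∈ Finset.Icc k n, g t := by
  have hinj : Set.InjOn (· - i) (Finset.Icc m n : Set ℕ) := by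
    intro a ha b hb hab
    simp only [Finset.coe_Icc, Set.mem_Icc] at ha hb hab
    omega
  have hsub : (Finset.Icc m n).image (· - i) ⊆ Finset.Icc k n := by
    intro u hu
    simp only [Finset.mem_image, Finset.mem_Icc] at hu ⊢
    omega
  rw [← Finset.sum_image (f := g) hinj]
  exact Finset.sum_le_sum_of_subset_of_nonneg hsub fun t ht _ => hg t ht

theorem sum_dist_comp_sub_le {E : Type*} [PseudoMetricSpace E] (s : ℕ → E) (T τ : ℕ) :
    ∑ t ∈ Finset.Icc (τ + 1) T, dist (s t) (s (t - τ))
      ≤ τ * ∑ t ∈ Finset.Icc 2 T, dist (s t) (s (t - 1)) :=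
  calc ∑ t ∈ Finset.Icc (τ + 1) T, dist (s t) (s (t - τ))
    _ ≤ ∑ t ∈ Finset.Icc (τ + 1) T, ∑ i ∈ Finset.range τ, dist (s (t - i)) (s (t - i - 1)) :=
        Finset.sum_le_sum fun t _ => dist_le_range_sum_dist (fun i => s (t - i)) τ
    _ = ∑ i ∈ Finset.range τ, ∑ t ∈ Finset.Icc (τ + 1) T, dist (s (t - i)) (s (t - i - 1)) :=
        Finset.sum_comm
    _ ≤ ∑ i ∈ Finset.range τ, ∑ t ∈ Finset.Icc 2 T, dist (s t) (s (t - 1)) := by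
        refine Finset.sum_le_sum fun i hi => ?_
        have hiτ : 2 + i ≤ τ + 1 := by linarith [Finset.mem_range.1 hi]
        exact sum_Icc_comp_sub_le (g := fun t => dist (s t) (s (t - 1))) hiτ
          fun _ _ => dist_nonneg
    _ = τ * ∑ t ∈ Finset.Icc 2 T, dist (s t) (s (t - 1)) := by
        rw [Finset.sum_const, Finset.card_range, nsmul_eq_mul]

theorem one_sub_mul_sum_le_of_delayed_recursion {d c : ℕ → ℝ} {ρ R : ℝ} {T τ : ℕ} (hτT : τ ≤ T)
    (hρ : 0 ≤ ρ) (hd : ∀ t ∈ Finset.Icc 1 T, 0 ≤ d t) (hdR : ∀ t ∈ Finset.Icc 1 τ, d t ≤ R)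
    (hrec : ∀ t ∈ Finset.Icc (τ + 1) T, d t ≤ ρ * d (t - τ) + c t) :
    (1 - ρ) * ∑ t ∈ Finset.Icc 1 T, d t ≤ τ * R + ∑ t ∈ Finset.Icc (τ + 1) T, c t := by
  have hsplit : ∑ t ∈ Finset.Icc 1 T, d t
      = ∑ t ∈ Finset.Icc 1 τ, d t + ∑ t ∈ Finset.Icc (τ + 1) T, d t := by
    simpa only [← Finset.Icc_add_one_left_eq_Ioc, zero_add] using
      (Finset.sum_Ioc_consecutive d (Nat.zero_le τ) hτT).symm
  have hinit : ∑ t ∈ Finset.Icc 1 τ, d t ≤ τ * R := by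
    simpa using Finset.sum_le_card_nsmul _ _ R hdR
  have hlate := Finset.sum_le_sum hrec
  rw [Finset.sum_add_distrib, ← Finset.mul_sum] at hlate
  have hshift := mul_le_mul_of_nonneg_left
    (sum_Icc_comp_sub_le (i := τ) (m := τ + 1) (add_comm 1 τ).le hd) hρ
  linarith

theorem sum_mul_comp_sub_add_mul_le {δ : ℕ → ℝ} {u v : ℝ} {T τ : ℕ} (hu : 0 ≤ u) (hv : 0 ≤ v)
    (huv : u + v ≤ 1) (hδ : ∀ t ∈ Finset.Icc 1 T, 0 ≤ δ t) :
    ∑ t ∈ Finset.Icc (τ + 1) T, (u * δ (t - τ) + v * δ t) ≤ ∑ t ∈ Finset.Icc 1 T, δ t := by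
  have hshift := sum_Icc_comp_sub_le (i := τ) (m := τ + 1) (add_comm 1 τ).le hδ
  have htail := sum_Icc_comp_sub_le (i := 0) (m := τ + 1) (Nat.le_add_left 1 τ) hδ
  calc ∑ t ∈ Finset.Icc (τ + 1) T, (u * δ (t - τ) + v * δ t)
    _ = u * ∑ t ∈ Finset.Icc (τ + 1) T, δ (t - τ) + v * ∑ t ∈ Finset.Icc (τ + 1) T, δ t := by
        rw [Finset.sum_add_distrib, Finset.mul_sum, Finset.mul_sum]
    _ ≤ u * ∑ t ∈ Finset.Icc 1 T, δ t + v * ∑ t ∈ Finset.Icc 1 T, δ t :=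
        add_le_add (mul_le_mul_of_nonneg_left hshift hu)
          (mul_le_mul_of_nonneg_left htail hv)
    _ = (u + v) * ∑ t ∈ Finset.Icc 1 T, δ t := (add_mul ..).symm
    _ ≤ ∑ t ∈ Finset.Icc 1 T, δ t := mul_le_of_le_one_left (Finset.sum_nonneg hδ) huv

section ProjectedGradient

variable {E : Type*} [NormedAddCommGroup E] [InnerProductSpace ℝ E] {X : Set E}

/-- `f` is `μ`-strongly convex and `L`-smooth on `X`, both expressed by first-order bounds in which
`G` plays the role of the gradient of `f`. Only the values on `X` matter, so `G` may be any field
satisfying the bounds, such as a gradient along the affine span of `X`. -/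
structure HasQuadraticBoundsOn (f : E → ℝ) (G : E → E) (μ L : ℝ) (X : Set E) : Prop where
  lower : ∀ a ∈ X, ∀ b ∈ X, f a + ⟪G a, b - a⟫ + μ / 2 * ‖b - a‖ ^ 2 ≤ f b
  upper : ∀ a ∈ X, ∀ b ∈ X, f b ≤ f a + ⟪G a, b - a⟫ + L / 2 * ‖b - a‖ ^ 2

/-- One projected gradient step of size `1 / α` on `X` from `a` to `p`, whose search direction is
within `δ` of `G a`. The projection is encoded as a nearest point of `X`, so that `X` need not be
closed. -/
def InexactProjGradStep (X : Set E) (G : E → E) (α δ : ℝ) (a p : E) : Prop :=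
  ∃ g : E, ‖g - G a‖ ≤ δ ∧ p ∈ X ∧ IsMinOn (fun v => ‖a - (1 / α) • g - v‖) X p

/-- The points `y 0, …, y n` arise from `n` successive inexact projected gradient steps. -/
def InexactProjGradPath (X : Set E) (G : E → E) (α δ : ℝ) (n : ℕ) (y : ℕ → E) : Prop :=
  ∀ j, 1 ≤ j → j ≤ n → InexactProjGradStep X G α δ (y (j - 1)) (y j)

/-- The factor `√η`, where `η = (α - μ) / (α + μ - γ)`, by which a step contracts the distance to
the minimizer, up to the gradient error. -/
noncomputable def contractionFactor (μ α γ : ℝ) : ℝ := √((α - μ) / (α + μ - γ))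

/-- The factor `√β`, where `β = 1 / (γ (α + μ - γ))`, by which a step amplifies the gradient
error; `γ` trades it off against `contractionFactor`. -/
noncomputable def noiseGain (μ α γ : ℝ) : ℝ := √(1 / (γ * (α + μ - γ)))

theorem contractionFactor_nonneg {μ α γ : ℝ} : 0 ≤ contractionFactor μ α γ :=
  Real.sqrt_nonneg _

theorem noiseGain_nonneg {μ α γ : ℝ} : 0 ≤ noiseGain μ α γ :=
  Real.sqrt_nonneg _

theorem contractionFactor_lt_one {μ α γ : ℝ} (hμα : μ ≤ α) (hγ : γ < 2 * μ) :
    contractionFactor μ α γ < 1 := by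
  have hden : 0 < α + μ - γ := by linarith
  rw [contractionFactor, Real.sqrt_lt' one_pos, one_pow, div_lt_one hden]
  linarith

variable {f : E → ℝ} {G : E → E} {μ L α γ δ : ℝ} {s a p v g : E} {n : ℕ} {y : ℕ → E}

theorem HasQuadraticBoundsOn.mono_upper {L' : ℝ} (hf : HasQuadraticBoundsOn f G μ L X)
    (hL : L ≤ L') : HasQuadraticBoundsOn f G μ L' X :=
  ⟨hf.lower, fun a ha b hb => (hf.upper a ha b hb).trans (by gcongr)⟩

theorem HasQuadraticBoundsOn.add_sq_norm_sub_le_of_isMinOn (hX : Convex ℝ X)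
    (hf : HasQuadraticBoundsOn f G μ L X) (hs : s ∈ X) (hmin : IsMinOn f X s) (hp : p ∈ X) :
    f s + μ / 2 * ‖p - s‖ ^ 2 ≤ f p := by
  rw [norm_sub_rev]
  exact add_modulus_norm_sub_le_of_uniformConvexOn_of_isMinOn
    (strongConvexOn_of_add_inner_le hX hf.lower) hs hmin hp

-- The terms in `‖p - a‖` from smoothness and from the projection cancel for step size `1 / α`.
theorem HasQuadraticBoundsOn.le_of_isMinOn_norm_sub (hX : Convex ℝ X) (hα : 0 < α)
    (hf : HasQuadraticBoundsOn f G μ α X) (ha : a ∈ X) (hv : v ∈ X) (hp : p ∈ X)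
    (hproj : IsMinOn (fun v => ‖a - (1 / α) • g - v‖) X p) :
    f p ≤ f v + (α - μ) / 2 * ‖a - v‖ ^ 2 - α / 2 * ‖p - v‖ ^ 2 - ⟪g - G a, p - v⟫ := by
  have hupper := hf.upper a ha p hp
  have hlower := hf.lower a ha v hv
  have hvar : α * ⟪a - p, v - p⟫ ≤ ⟪g, v - p⟫ := by
    have h := inner_sub_sub_nonpos_of_isMinOn_norm_sub hX hp hproj hv
    rw [sub_right_comm, inner_sub_left, real_inner_smul_left, sub_nonpos, one_div,
      ← div_eq_inv_mul, le_div_iff₀ hα] at h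
    linarith
  have hthree : ‖a - v‖ ^ 2 = ‖p - a‖ ^ 2 - 2 * ⟪a - p, v - p⟫ + ‖p - v‖ ^ 2 := by
    rw [norm_sub_rev p a, norm_sub_rev p v, ← norm_sub_sq_real, sub_sub_sub_cancel_right]
  have hG : ⟪G a, p - a⟫ - ⟪G a, v - a⟫ = ⟪G a, p - v⟫ := by
    rw [← inner_sub_right, sub_sub_sub_cancel_right]
  have hg : ⟪g - G a, p - v⟫ = -⟪g, v - p⟫ - ⟪G a, p - v⟫ := by
    rw [inner_sub_left, ← inner_neg_right, neg_sub]
  rw [norm_sub_rev v a] at hlower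
  linear_combination hupper + hlower + hvar + hG + hg - α / 2 * hthree

theorem InexactProjGradStep.norm_sub_le (hstep : InexactProjGradStep X G α δ a p)
    (hX : Convex ℝ X) (hμα : μ ≤ α) (hγ0 : 0 < γ) (hγ : γ < 2 * μ)
    (hf : HasQuadraticBoundsOn f G μ α X) (hs : s ∈ X) (hmin : IsMinOn f X s) (ha : a ∈ X) :
    ‖p - s‖ ≤ contractionFactor μ α γ * ‖a - s‖ + noiseGain μ α γ * δ := by
  obtain ⟨g, hg, hp, hproj⟩ := hstep
  have hdescent := hf.le_of_isMinOn_norm_sub hX (by linarith) ha hs hp hproj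
  have hgrowth := hf.add_sq_norm_sub_le_of_isMinOn hX hs hmin hp
  have herror : -⟪g - G a, p - s⟫ ≤ δ * ‖p - s‖ :=
    calc -⟪g - G a, p - s⟫ ≤ ‖g - G a‖ * ‖p - s‖ :=
          (neg_le_abs _).trans (abs_real_inner_le_norm _ _)
      _ ≤ δ * ‖p - s‖ := by gcongr
  exact le_sqrt_mul_add_sqrt_mul_of_mul_sq_le hγ0 (by linarith) (sub_nonneg.2 hμα)
    ((norm_nonneg _).trans hg) (norm_nonneg _) (by linarith)

namespace InexactProjGradPath

theorem mem (hy : InexactProjGradPath X G α δ n y) (hy0 : y 0 ∈ X) : y n ∈ X := by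
  cases n with
  | zero => exact hy0
  | succ n =>
    obtain ⟨_, _, hmem, _⟩ := hy (n + 1) n.succ_pos le_rfl
    exact hmem

theorem norm_sub_le (hy : InexactProjGradPath X G α δ n y) (hX : Convex ℝ X) (hμα : μ ≤ α)
    (hγ0 : 0 < γ) (hγ : γ < 2 * μ) (hf : HasQuadraticBoundsOn f G μ α X) (hs : s ∈ X)
    (hmin : IsMinOn f X s) (hy0 : y 0 ∈ X) :
    ‖y n - s‖ ≤ contractionFactor μ α γ ^ n * ‖y 0 - s‖
      + (1 - contractionFactor μ α γ ^ n)
        * (noiseGain μ α γ * δ / (1 - contractionFactor μ α γ)) := by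
  refine le_pow_mul_add_of_affine_recursion (d := fun j => ‖y j - s‖) contractionFactor_nonneg
    (contractionFactor_lt_one hμα hγ).ne fun j hj => ?_
  have hyj : y j ∈ X := mem (fun i hi hij => hy i hi (hij.trans hj.le)) hy0
  exact (hy (j + 1) j.succ_pos hj).norm_sub_le hX hμα hγ0 hγ hf hs hmin hyj

end InexactProjGradPath

end ProjectedGradient

section HiOCO

variable {E : Type*} [NormedAddCommGroup E] [InnerProductSpace ℝ E] {X : Set E}
  {f : ℕ → E → ℝ} {G : ℕ → E → E} {μ α γ R D : ℝ} {δ : ℕ → ℝ} {T τ Jr Jl : ℕ} {x s : ℕ → E}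

/-- The HiOCO iterates with zero local delay: each `x t` with `τ < t ≤ T` arises from `x (t - τ)`
by `Jr` master steps along `G (t - τ)` followed by `Jl` worker steps along `G t`. -/
structure IsHiOCORun (X : Set E) (G : ℕ → E → E) (α : ℝ) (δ : ℕ → ℝ) (T τ Jr Jl : ℕ)
    (x : ℕ → E) : Prop where
  mem : ∀ t, 1 ≤ t → t ≤ T → x t ∈ X
  round : ∀ t, τ < t → t ≤ T → ∃ y z : ℕ → E,
    y 0 = x (t - τ) ∧ InexactProjGradPath X (G (t - τ)) α (δ (t - τ)) Jr y ∧
    z 0 = y Jr ∧ InexactProjGradPath X (G t) α (δ t) Jl z ∧ x t = z Jl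

namespace IsHiOCORun

theorem norm_sub_le (hx : IsHiOCORun X G α δ T τ Jr Jl x) (hX : Convex ℝ X) (hμα : μ ≤ α)
    (hγ0 : 0 < γ) (hγ : γ < 2 * μ)
    (hf : ∀ t, 1 ≤ t → t ≤ T → HasQuadraticBoundsOn (f t) (G t) μ α X)
    (hs : ∀ t, 1 ≤ t → t ≤ T → s t ∈ X) (hmin : ∀ t, 1 ≤ t → t ≤ T → IsMinOn (f t) X (s t))
    {t : ℕ} (hτt : τ < t) (htT : t ≤ T) :
    ‖x t - s t‖ ≤ contractionFactor μ α γ ^ (Jl + Jr) * ‖x (t - τ) - s (t - τ)‖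
      + (‖s t - s (t - τ)‖
        + noiseGain μ α γ / (1 - contractionFactor μ α γ)
          * ((contractionFactor μ α γ ^ Jl - contractionFactor μ α γ ^ (Jl + Jr)) * δ (t - τ)
            + (1 - contractionFactor μ α γ ^ Jl) * δ t)) := by
  obtain ⟨y, z, hy0, hy, hz0, hz, hxz⟩ := hx.round t hτt htT
  have hprev : 1 ≤ t - τ := by omega
  have hprevT : t - τ ≤ T := by omega
  have ht : 1 ≤ t := by omega
  have hy0X : y 0 ∈ X := hy0 ▸ hx.mem _ hprev hprevT
  have hmaster := hy.norm_sub_le hX hμα hγ0 hγ (hf _ hprev hprevT) (hs _ hprev hprevT)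
    (hmin _ hprev hprevT) hy0X
  have hworker := hz.norm_sub_le hX hμα hγ0 hγ (hf t ht htT) (hs t ht htT) (hmin t ht htT)
    (hz0 ▸ hy.mem hy0X)
  rw [hy0] at hmaster
  rw [hz0, ← hxz] at hworker
  set q := contractionFactor μ α γ
  have hq0 : 0 ≤ q := contractionFactor_nonneg
  have hqJl : q ^ Jl ≤ 1 := pow_le_one₀ hq0 (contractionFactor_lt_one hμα hγ).le
  have hdrift : ‖y Jr - s t‖ ≤ ‖y Jr - s (t - τ)‖ + ‖s t - s (t - τ)‖ := by
    rw [norm_sub_rev (s t)]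
    exact norm_sub_le_norm_sub_add_norm_sub _ _ _
  have hmaster_drift := mul_le_mul_of_nonneg_left (hdrift.trans (add_le_add_left hmaster _))
    (pow_nonneg hq0 Jl)
  have hdrift_contract := mul_le_of_le_one_left (norm_nonneg (s t - s (t - τ))) hqJl
  rw [pow_add]
  linear_combination hworker + hmaster_drift + hdrift_contract

theorem one_sub_mul_sum_norm_sub_le (hx : IsHiOCORun X G α δ T τ Jr Jl x) (hX : Convex ℝ X)
    (hR : ∀ a ∈ X, ∀ b ∈ X, ‖a - b‖ ≤ R) (hτT : τ ≤ T) (hμα : μ ≤ α) (hγ0 : 0 < γ)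
    (hγ : γ < 2 * μ) (hf : ∀ t, 1 ≤ t → t ≤ T → HasQuadraticBoundsOn (f t) (G t) μ α X)
    (hs : ∀ t, 1 ≤ t → t ≤ T → s t ∈ X) (hmin : ∀ t, 1 ≤ t → t ≤ T → IsMinOn (f t) X (s t))
    (hδ : ∀ t, 1 ≤ t → t ≤ T → 0 ≤ δ t) :
    (1 - contractionFactor μ α γ ^ (Jl + Jr)) * ∑ t ∈ Finset.Icc 1 T, ‖x t - s t‖
      ≤ τ * R + τ * ∑ t ∈ Finset.Icc 2 T, ‖s t - s (t - 1)‖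
        + noiseGain μ α γ / (1 - contractionFactor μ α γ) * ∑ t ∈ Finset.Icc 1 T, δ t := by
  have hrec := one_sub_mul_sum_le_of_delayed_recursion (d := fun t => ‖x t - s t‖) (R := R) hτT
    (pow_nonneg contractionFactor_nonneg (Jl + Jr)) (fun _ _ => norm_nonneg _)
    (fun t ht => by
      obtain ⟨ht1, htτ⟩ := Finset.mem_Icc.1 ht
      exact hR _ (hx.mem t ht1 (htτ.trans hτT)) _ (hs t ht1 (htτ.trans hτT)))
    (fun t ht => hx.norm_sub_le hX hμα hγ0 hγ hf hs hmin (Finset.mem_Icc.1 ht).1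
      (Finset.mem_Icc.1 ht).2)
  rw [Finset.sum_add_distrib, ← Finset.mul_sum] at hrec
  set q := contractionFactor μ α γ
  have hq0 : 0 ≤ q := contractionFactor_nonneg
  have hq1 : q < 1 := contractionFactor_lt_one hμα hγ
  have hpath : ∑ t ∈ Finset.Icc (τ + 1) T, ‖s t - s (t - τ)‖
      ≤ τ * ∑ t ∈ Finset.Icc 2 T, ‖s t - s (t - 1)‖ := by
    simpa only [dist_eq_norm] using sum_dist_comp_sub_le s T τ
  have herror := sum_mul_comp_sub_add_mul_le (τ := τ) (u := q ^ Jl - q ^ (Jl + Jr))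
    (v := 1 - q ^ Jl) (sub_nonneg.2 (pow_le_pow_of_le_one hq0 hq1.le (Nat.le_add_right Jl Jr)))
    (sub_nonneg.2 (pow_le_one₀ hq0 hq1.le)) (by linarith [pow_nonneg hq0 (Jl + Jr)])
    fun t ht => hδ t (Finset.mem_Icc.1 ht).1 (Finset.mem_Icc.1 ht).2
  have hgain : 0 ≤ noiseGain μ α γ / (1 - q) := div_nonneg noiseGain_nonneg (sub_nonneg.2 hq1.le)
  linarith [mul_le_mul_of_nonneg_left herror hgain]

end IsHiOCORun

theorem stmt_12_general (hX : Convex ℝ X) (hR : ∀ a ∈ X, ∀ b ∈ X, ‖a - b‖ ≤ R) (hT : 1 ≤ T)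
    (hτT : τ ≤ T) (hJ : 1 ≤ Jr + Jl) (hμα : μ ≤ α) (hγ0 : 0 < γ) (hγ : γ < 2 * μ)
    (hf : ∀ t, 1 ≤ t → t ≤ T → HasQuadraticBoundsOn (f t) (G t) μ α X)
    (hD : ∀ t, 1 ≤ t → t ≤ T → ∀ x ∈ X, ‖G t x‖ ≤ D)
    (hs : ∀ t, 1 ≤ t → t ≤ T → s t ∈ X) (hmin : ∀ t, 1 ≤ t → t ≤ T → IsMinOn (f t) X (s t))
    (hδ : ∀ t, 1 ≤ t → t ≤ T → 0 ≤ δ t) (hx : IsHiOCORun X G α δ T τ Jr Jl x) :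
    ∑ t ∈ Finset.Icc 1 T, (f t (x t) - f t (s t))
      ≤ D / (1 - contractionFactor μ α γ ^ (Jl + Jr))
        * (τ * R + τ * ∑ t ∈ Finset.Icc 2 T, ‖s t - s (t - 1)‖
          + noiseGain μ α γ / (1 - contractionFactor μ α γ) * ∑ t ∈ Finset.Icc 1 T, δ t) := by
  have hD0 : 0 ≤ D := (norm_nonneg _).trans (hD 1 le_rfl hT _ (hs 1 le_rfl hT))
  have hpow : 0 < 1 - contractionFactor μ α γ ^ (Jl + Jr) :=
    sub_pos.2 (pow_lt_one₀ contractionFactor_nonneg (contractionFactor_lt_one hμα hγ) (by omega))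
  have htrack := hx.one_sub_mul_sum_norm_sub_le hX hR hτT hμα hγ0 hγ hf hs hmin hδ
  have hregret : ∀ t ∈ Finset.Icc 1 T, f t (x t) - f t (s t) ≤ D * ‖x t - s t‖ := by
    intro t ht
    obtain ⟨ht1, htT⟩ := Finset.mem_Icc.1 ht
    have hxt := hx.mem t ht1 htT
    have hquad : 0 ≤ μ / 2 * ‖s t - x t‖ ^ 2 := mul_nonneg (by linarith) (sq_nonneg _)
    have hlower := (hf t ht1 htT).lower _ hxt _ (hs t ht1 htT)
    exact sub_le_mul_norm_sub_of_add_inner_le (by linarith) (hD t ht1 htT _ hxt)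
  calc ∑ t ∈ Finset.Icc 1 T, (f t (x t) - f t (s t))
    _ ≤ D * ∑ t ∈ Finset.Icc 1 T, ‖x t - s t‖ := by
        rw [Finset.mul_sum]
        exact Finset.sum_le_sum hregret
    _ ≤ _ := by
        rw [div_mul_eq_mul_div, mul_div_assoc]
        gcongr
        rwa [le_div_iff₀' hpow]

end HiOCO

/-- Theorem 1(i) of the paper: dynamic regret bound for HiOCO with zero local
delay. With `η = (α − μ)/(α + μ − γ)` and `β = 1/(γ(α + μ − γ))`,
`Σ_{t=1}^{T} (f_t(x_t) − f_t(x_t*)) ≤ τDR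
  + (D/(1 − (√η)^{J_l+J_r})) (τR + τΠ* + (√β/(1 − √η))Δ)`. -/
theorem stmt_12
    {E : Type*} [NormedAddCommGroup E] [InnerProductSpace ℝ E] [FiniteDimensional ℝ E]
    (X : Set E) (hXne : X.Nonempty) (hXcp : IsCompact X) (hXconv : Convex ℝ X)
    (R : ℝ) (hR : ∀ a ∈ X, ∀ b ∈ X, ‖a - b‖ ≤ R)
    (T τ Jr Jl : ℕ) (hT : 1 ≤ T) (hτ1 : 1 ≤ τ) (hτT : τ < T) (hJ : 1 ≤ Jr + Jl)
    (μ L α γ : ℝ) (hμ : 0 < μ) (hμL : μ ≤ L) (hLα : L ≤ α)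
    (hγ0 : 0 < γ) (hγ : γ < 2 * μ)
    (f : ℕ → E → ℝ) (hdiff : ∀ t, 1 ≤ t → t ≤ T → Differentiable ℝ (f t))
    (hsc : ∀ t, 1 ≤ t → t ≤ T → ∀ a ∈ X, ∀ b ∈ X,
      f t a + ⟪gradient (f t) a, b - a⟫ + μ / 2 * ‖b - a‖ ^ 2 ≤ f t b)
    (hsm : ∀ t, 1 ≤ t → t ≤ T → ∀ a ∈ X, ∀ b ∈ X,
      f t b ≤ f t a + ⟪gradient (f t) a, b - a⟫ + L / 2 * ‖b - a‖ ^ 2)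
    (D : ℝ) (hD : ∀ t, 1 ≤ t → t ≤ T → ∀ x ∈ X, ‖gradient (f t) x‖ ≤ D)
    (xstar : ℕ → E) (hxsX : ∀ t, 1 ≤ t → t ≤ T → xstar t ∈ X)
    (hxsmin : ∀ t, 1 ≤ t → t ≤ T → ∀ x ∈ X, f t (xstar t) ≤ f t x)
    (δ : ℕ → ℝ) (hδ : ∀ t, 1 ≤ t → t ≤ T → 0 ≤ δ t)
    (x : ℕ → E) (hxX : ∀ t, 1 ≤ t → t ≤ T → x t ∈ X)
    (hiter : ∀ t, τ < t → t ≤ T → ∃ y z : ℕ → E,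
      y 0 = x (t - τ) ∧
      (∀ j, 1 ≤ j → j ≤ Jr → ∃ g : E,
        ‖g - gradient (f (t - τ)) (y (j - 1))‖ ≤ δ (t - τ) ∧ y j ∈ X ∧
        ∀ v ∈ X, ‖(y (j - 1) - (1 / α) • g) - y j‖ ≤ ‖(y (j - 1) - (1 / α) • g) - v‖) ∧
      z 0 = y Jr ∧
      (∀ j, 1 ≤ j → j ≤ Jl → ∃ g : E,
        ‖g - gradient (f t) (z (j - 1))‖ ≤ δ t ∧ z j ∈ X ∧
        ∀ v ∈ X, ‖(z (j - 1) - (1 / α) • g) - z j‖ ≤ ‖(z (j - 1) - (1 / α) • g) - v‖) ∧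
      x t = z Jl) :
    ∑ t ∈ Finset.Icc 1 T, (f t (x t) - f t (xstar t))
      ≤ (τ : ℝ) * D * R
        + D / (1 - Real.sqrt ((α - μ) / (α + μ - γ)) ^ (Jl + Jr))
          * ((τ : ℝ) * R
            + (τ : ℝ) * ∑ t ∈ Finset.Icc 2 T, ‖xstar t - xstar (t - 1)‖
            + Real.sqrt (1 / (γ * (α + μ - γ)))
                / (1 - Real.sqrt ((α - μ) / (α + μ - γ)))
              * ∑ t ∈ Finset.Icc 1 T, δ t) := by
  have hD0 : 0 ≤ D := (norm_nonneg _).trans (hD 1 le_rfl hT _ (hxX 1 le_rfl hT))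
  have hR0 : 0 ≤ R := (norm_nonneg _).trans (hR _ (hxX 1 le_rfl hT) _ (hxX 1 le_rfl hT))
  have hf : ∀ t, 1 ≤ t → t ≤ T → HasQuadraticBoundsOn (f t) (gradient (f t)) μ α X :=
    fun t h1 hT => HasQuadraticBoundsOn.mono_upper ⟨hsc t h1 hT, hsm t h1 hT⟩ hLα
  exact (stmt_12_general hXconv hR hT hτT.le hJ (hμL.trans hLα) hγ0 hγ hf hD hxsX hxsmin hδ
    ⟨hxX, hiter⟩).trans (le_add_of_nonneg_left (by positivity))
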